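/- The Wu characteristic of the complete complex equals (-1)^d: if G is the simplicial complex of all nonempty subsets of a set with d+1 elements, then ω(G) = Σ_{x,y ∈ G, x∩y ≠ ∅} (-1)^(|x|-1) · (-1)^(|y|-1) = (-1)^d. -/

import Mathlib

/-!
The simplices of the complete complex on `s` that miss a simplex `x` form the complete complex on
`s \ x`. Complete complexes on nonempty sets have Euler characteristic `1`, so the signed count of
the simplices meeting `x` is `1 - 1 = 0`, unless `s \ x = ∅`. Hence only the facet `x = s`
contributes to the Wu characteristic, and its contribution is its own sign.
-/

section SimplexFamilies

open Finset

variable {α : Type*}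

/-- The sign `ω(x)` of a simplex, encoded as its set of vertices; the exponent is the dimension of
`x` only for nonempty `x`. -/
def simplexSign (x : Finset α) : ℤ :=
  (-1) ^ (#x - 1)

/-- The Euler characteristic of a finite family of simplices, as the sum of their signs. The family
need not be closed under taking faces, so that simplices meeting a given one can be counted. -/
def eulerCharacteristic (G : Finset (Finset α)) : ℤ :=
  ∑ x ∈ G, simplexSign x

lemma simplexSign_of_nonempty {x : Finset α} (hx : x.Nonempty) :
    simplexSign x = -(-1) ^ #x := by
  rw [simplexSign, ← mul_pow_sub_one hx.card_ne_zero, neg_one_mul, neg_neg]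

variable [DecidableEq α]

/-- The Wu characteristic of a finite family of simplices; the sum is over ordered pairs. -/
def wuCharacteristic (G : Finset (Finset α)) : ℤ :=
  ∑ x ∈ G, ∑ y ∈ G with (x ∩ y).Nonempty, simplexSign x * simplexSign y

lemma wuCharacteristic_eq_sum_mul_eulerCharacteristic (G : Finset (Finset α)) :
    wuCharacteristic G =
      ∑ x ∈ G, simplexSign x * eulerCharacteristic {y ∈ G | (x ∩ y).Nonempty} := by
  simp only [wuCharacteristic, eulerCharacteristic, mul_sum]

/-- The complete complex on the vertex set `s`, as the finite set of its simplices. -/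
def completeComplex (s : Finset α) : Finset (Finset α) :=
  s.powerset.erase ∅

lemma mem_completeComplex {s x : Finset α} : x ∈ completeComplex s ↔ x.Nonempty ∧ x ⊆ s := by
  rw [completeComplex, mem_erase, mem_powerset, nonempty_iff_ne_empty]

lemma eulerCharacteristic_completeComplex (s : Finset α) :
    eulerCharacteristic (completeComplex s) = if s = ∅ then 0 else 1 := by
  calc
    eulerCharacteristic (completeComplex s) = ∑ x ∈ s.powerset.erase ∅, -(-1 : ℤ) ^ #x :=
      sum_congr rfl fun _ hx ↦ simplexSign_of_nonempty (mem_completeComplex.mp hx).1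
    _ = 1 - ∑ x ∈ s.powerset, (-1 : ℤ) ^ #x := by
      rw [sum_neg_distrib, sum_erase_eq_sub (empty_mem_powerset s), card_empty, pow_zero, neg_sub]
    _ = if s = ∅ then 0 else 1 := by
      rw [sum_powerset_neg_one_pow_card]
      split_ifs <;> rfl

lemma filter_not_meets_completeComplex (s x : Finset α) :
    {y ∈ completeComplex s | ¬(x ∩ y).Nonempty} = completeComplex (s \ x) := by
  ext y
  rw [mem_filter, mem_completeComplex, mem_completeComplex, not_nonempty_iff_eq_empty,
    ← disjoint_iff_inter_eq_empty, disjoint_comm, subset_sdiff, and_assoc]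

lemma eulerCharacteristic_filter_meets_completeComplex {s : Finset α} (hs : s.Nonempty)
    (x : Finset α) :
    eulerCharacteristic {y ∈ completeComplex s | (x ∩ y).Nonempty} = if s ⊆ x then 1 else 0 := by
  have hsplit : eulerCharacteristic {y ∈ completeComplex s | (x ∩ y).Nonempty} +
      eulerCharacteristic (completeComplex (s \ x)) = eulerCharacteristic (completeComplex s) := by
    rw [← filter_not_meets_completeComplex]
    exact sum_filter_add_sum_filter_not _ _ _
  rw [eq_sub_of_add_eq hsplit, eulerCharacteristic_completeComplex,
    eulerCharacteristic_completeComplex, if_neg hs.ne_empty]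
  simp only [sdiff_eq_empty_iff_subset]
  split_ifs <;> rfl

theorem wu_characteristic_complete_complex_general {s : Finset α} {d : ℕ} (hs : #s = d + 1) :
    wuCharacteristic (completeComplex s) = (-1) ^ d := by
  have hne : s.Nonempty := card_pos.mp (hs ▸ d.succ_pos)
  have hmem : s ∈ completeComplex s := mem_completeComplex.mpr ⟨hne, Subset.rfl⟩
  have hvanish : ∀ x ∈ completeComplex s, x ≠ s →
      simplexSign x * eulerCharacteristic {y ∈ completeComplex s | (x ∩ y).Nonempty} = 0 := by
    intro x hx hxs
    have hsx : ¬s ⊆ x := fun h ↦ hxs ((mem_completeComplex.mp hx).2.antisymm h)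
    rw [eulerCharacteristic_filter_meets_completeComplex hne, if_neg hsx, mul_zero]
  rw [wuCharacteristic_eq_sum_mul_eulerCharacteristic, sum_eq_single_of_mem s hmem hvanish,
    eulerCharacteristic_filter_meets_completeComplex hne, if_pos Subset.rfl, mul_one, simplexSign,
    hs, Nat.add_sub_cancel]

end SimplexFamilies

/-- The Wu characteristic of the complete complex `K_{d+1}` (all nonempty subsets
of a `(d+1)`-element set) equals `(-1)^d`. -/
theorem wu_characteristic_complete_complex (d : ℕ) {V : Type} [Fintype V]
    [DecidableEq V] (hV : Fintype.card V = d + 1) :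
    ∑ x ∈ (Finset.univ : Finset V).powerset.erase ∅,
      ∑ y ∈ ((Finset.univ : Finset V).powerset.erase ∅).filter
          (fun y => (x ∩ y).Nonempty),
        (-1 : ℤ) ^ (x.card - 1) * (-1 : ℤ) ^ (y.card - 1)
      = (-1 : ℤ) ^ d :=
  wu_characteristic_complete_complex_general hV
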